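/- arXiv:1901.01872 — 2 statements merged into one kernel-verified Lean document; each statement's English description precedes it below -/
import Mathlib

section
/- If the stepsize parameter satisfies 0 < ε ≤ 2π(λ/Λ)², then for every x ∈ ℝⁿ the expected one-step descent inequality holds: Σᵢ pᵢ F(x^(i)) ≤ F(x) − (ελ − ε²Λ²/(2λπ))‖g(x)‖², and moreover the coefficient ελ − ε²Λ²/(2λπ) is nonnegative. -/
open Matrix BigOperators

noncomputable section

/-- Second derivative of the `i`-th local objective. -/
def d2 {n : ℕ} (f : Fin n → ℝ → ℝ) (i : Fin n) (s : ℝ) : ℝ := deriv (deriv (f i)) s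

/-- The diagonal matrix `G(x)` with `G(x)_ii = f_i''(x_i)`. -/
def Gmat {n : ℕ} (f : Fin n → ℝ → ℝ) (x : Fin n → ℝ) : Matrix (Fin n) (Fin n) ℝ :=
  Matrix.diagonal (fun i => d2 f i (x i))

/-- The Hessian `H(x) = I − W + αG(x)` of the penalized objective. -/
def Hmat {n : ℕ} (W : Matrix (Fin n) (Fin n) ℝ) (f : Fin n → ℝ → ℝ) (α : ℝ)
    (x : Fin n → ℝ) : Matrix (Fin n) (Fin n) ℝ :=
  1 - W + α • Gmat f x

/-- `B = I − 2W_d + W`. -/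
def Bmat {n : ℕ} (W : Matrix (Fin n) (Fin n) ℝ) : Matrix (Fin n) (Fin n) ℝ :=
  1 - (2 : ℝ) • Matrix.diagonal (fun i => W i i) + W

/-- Diagonal entries of the splitting matrix `D(x) = αG(x) + 2(I − W_d)`. -/
def dEntry {n : ℕ} (W : Matrix (Fin n) (Fin n) ℝ) (f : Fin n → ℝ → ℝ) (α : ℝ)
    (x : Fin n → ℝ) (i : Fin n) : ℝ :=
  α * d2 f i (x i) + 2 * (1 - W i i)

/-- `D(x) = αG(x) + 2(I − W_d)`. -/
def Dmat {n : ℕ} (W : Matrix (Fin n) (Fin n) ℝ) (f : Fin n → ℝ → ℝ) (α : ℝ)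
    (x : Fin n → ℝ) : Matrix (Fin n) (Fin n) ℝ :=
  Matrix.diagonal (dEntry W f α x)

/-- `D(x)^{1/2}`. -/
def Dhalf {n : ℕ} (W : Matrix (Fin n) (Fin n) ℝ) (f : Fin n → ℝ → ℝ) (α : ℝ)
    (x : Fin n → ℝ) : Matrix (Fin n) (Fin n) ℝ :=
  Matrix.diagonal (fun i => Real.sqrt (dEntry W f α x i))

/-- `D(x)^{-1/2}`. -/
def Dinvhalf {n : ℕ} (W : Matrix (Fin n) (Fin n) ℝ) (f : Fin n → ℝ → ℝ) (α : ℝ)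
    (x : Fin n → ℝ) : Matrix (Fin n) (Fin n) ℝ :=
  Matrix.diagonal (fun i => (Real.sqrt (dEntry W f α x i))⁻¹)

/-- The approximate Hessian inverse
`Ĥ(x)⁻¹ = D(x)^{-1/2}(I + D(x)^{-1/2} B D(x)^{-1/2}) D(x)^{-1/2}`. -/
def Hhatinv {n : ℕ} (W : Matrix (Fin n) (Fin n) ℝ) (f : Fin n → ℝ → ℝ) (α : ℝ)
    (x : Fin n → ℝ) : Matrix (Fin n) (Fin n) ℝ :=
  Dinvhalf W f α x * (1 + Dinvhalf W f α x * Bmat W * Dinvhalf W f α x) * Dinvhalf W f α x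

/-- The penalized objective `F(x) = (1/2) xᵀ(I−W)x + α Σᵢ f_i(x_i)`. -/
def Fobj {n : ℕ} (W : Matrix (Fin n) (Fin n) ℝ) (f : Fin n → ℝ → ℝ) (α : ℝ)
    (x : Fin n → ℝ) : ℝ :=
  (1 / 2) * (x ⬝ᵥ ((1 - W).mulVec x)) + α * ∑ i, f i (x i)

/-- The gradient `g(x) = (I − W)x + α (f_i'(x_i))_i` of the penalized objective. -/
def gvec {n : ℕ} (W : Matrix (Fin n) (Fin n) ℝ) (f : Fin n → ℝ → ℝ) (α : ℝ)
    (x : Fin n → ℝ) : Fin n → ℝ :=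
  fun i => ((1 - W).mulVec x) i + α * deriv (f i) (x i)

/-- The asynchronous update `x^(i)`: agent `i` moves along the approximate Newton
direction with stepsize `ε / p i`; other coordinates are unchanged. -/
def upd {n : ℕ} (W : Matrix (Fin n) (Fin n) ℝ) (f : Fin n → ℝ → ℝ) (α : ℝ)
    (p : Fin n → ℝ) (ε : ℝ) (x : Fin n → ℝ) (i : Fin n) : Fin n → ℝ :=
  Function.update x i (x i - (ε / p i) * ((Hhatinv W f α x).mulVec (gvec W f α x)) i)

/-- Euclidean norm on `ℝⁿ`. -/
def enorm {n : ℕ} (v : Fin n → ℝ) : ℝ := Real.sqrt (∑ i, v i ^ 2)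

lemma aux_tangent (f : ℝ → ℝ) (hf : ContDiff ℝ 2 f) (M : ℝ)
    (hM : ∀ s, deriv (deriv f) s ≤ M) (a t : ℝ) :
    f (a + t) ≤ f a + t * deriv f a + M / 2 * t ^ 2 := by
  have hf1 : Differentiable ℝ f := hf.differentiable (by norm_num)
  have hf2 : Differentiable ℝ (deriv f) := by
    have h : ContDiff ℝ 1 (deriv f) := by
      have := (contDiff_succ_iff_deriv (n := 1) (f := f) (𝕜 := ℝ)).1 (by simpa [one_add_one_eq_two] using hf)
      exact this.2.2
    exact h.differentiable (by norm_num)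
  have h1 : ∀ s, HasDerivAt (fun s => M / 2 * s ^ 2 - f s) (M * s - deriv f s) s := by
    intro s
    have := ((hasDerivAt_pow 2 s).const_mul (M / 2)).sub (hf1 s).hasDerivAt
    refine this.congr_deriv ?_
    push_cast; ring
  have h1' : deriv (fun s => M / 2 * s ^ 2 - f s) = fun s => M * s - deriv f s :=
    funext fun s => (h1 s).deriv
  have h2 : ∀ s, HasDerivAt (fun s => M * s - deriv f s) (M - deriv (deriv f) s) s := by
    intro s
    have := ((hasDerivAt_id s).const_mul M).sub (hf2 s).hasDerivAt
    refine this.congr_deriv ?_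
    ring
  have hc : ConvexOn ℝ Set.univ (fun s => M / 2 * s ^ 2 - f s) := by
    apply convexOn_univ_of_deriv2_nonneg
    · exact fun s => (h1 s).differentiableAt
    · rw [h1']; exact fun s => (h2 s).differentiableAt
    · intro s
      simp only [Function.iterate_succ, Function.iterate_zero, Function.comp, id]
      rw [h1', (h2 s).deriv]
      linarith [hM s]
  rcases lt_trichotomy t 0 with ht | ht | ht
  · have := hc.slope_le_of_hasDerivAt (Set.mem_univ (a + t)) (Set.mem_univ a) (by linarith) (h1 a)
    rw [slope_def_field, div_le_iff₀ (by linarith)] at this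
    nlinarith
  · subst ht; simp
  · have := hc.le_slope_of_hasDerivAt (Set.mem_univ a) (Set.mem_univ (a + t)) (by linarith) (h1 a)
    rw [slope_def_field, le_div_iff₀ (by linarith)] at this
    nlinarith

lemma aux_psd {n : ℕ} (A : Matrix (Fin n) (Fin n) ℝ)
    (hA : ∀ u v, u ⬝ᵥ A.mulVec v = v ⬝ᵥ A.mulVec u) (L : ℝ) (hL : 0 < L)
    (h0 : ∀ u, 0 ≤ u ⬝ᵥ A.mulVec u) (h1 : ∀ u, u ⬝ᵥ A.mulVec u ≤ L * (u ⬝ᵥ u)) (g : Fin n → ℝ) :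
    A.mulVec g ⬝ᵥ A.mulVec g ≤ L ^ 2 * (g ⬝ᵥ g) := by
  set v := A.mulVec g with hv
  have e := h0 (L • g - v)
  have e1 := h1 v
  have e2 := h1 g
  have e3 := hA g v
  rw [← hv] at e3 e2
  simp only [mulVec_sub, mulVec_smul, dotProduct_sub, sub_dotProduct, smul_dotProduct,
    dotProduct_smul, smul_eq_mul, ← hv] at e
  have e4 : L * (v ⬝ᵥ v) ≤ L * (L * (g ⬝ᵥ v)) := by nlinarith
  have e5 := le_of_mul_le_mul_left e4 hL
  nlinarith

lemma aux_B {n : ℕ} (W : Matrix (Fin n) (Fin n) ℝ) (y z : Fin n → ℝ) :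
    y ⬝ᵥ (Bmat W).mulVec z
      = ∑ i, (1 - 2 * W i i) * (y i * z i) + ∑ i, ∑ j, W i j * (y i * z j) := by
  unfold Bmat
  rw [add_mulVec, sub_mulVec, smul_mulVec, one_mulVec]
  simp only [dotProduct, Pi.add_apply, Pi.sub_apply, mulVec_diagonal, Pi.smul_apply, smul_eq_mul,
    ← Finset.sum_add_distrib]
  refine Finset.sum_congr rfl fun i _ => ?_
  simp only [mulVec, dotProduct]
  rw [mul_add, Finset.mul_sum]
  congr 1
  · ring
  · exact Finset.sum_congr rfl fun j _ => by ring

lemma aux_rows {n : ℕ} (W : Matrix (Fin n) (Fin n) ℝ) (hWsymm : W.IsSymm)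
    (hr : ∀ i, ∑ j, W i j = 1) (c : Fin n → ℝ) :
    ∑ i, ∑ j, W i j * c i = ∑ i, c i ∧ ∑ i, ∑ j, W i j * c j = ∑ i, c i := by
  have h : ∑ i, ∑ j, W i j * c i = ∑ i, c i := by
    refine Finset.sum_congr rfl fun i _ => ?_
    rw [← Finset.sum_mul, hr, one_mul]
  refine ⟨h, ?_⟩
  rw [Finset.sum_comm, ← h]
  exact Finset.sum_congr rfl fun i _ => Finset.sum_congr rfl fun j _ => by rw [hWsymm.apply]

lemma aux_Bbd {n : ℕ} (W : Matrix (Fin n) (Fin n) ℝ) (hWsymm : W.IsSymm)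
    (hWnonneg : ∀ i j, 0 ≤ W i j) (hr : ∀ i, ∑ j, W i j = 1) (y : Fin n → ℝ) :
    0 ≤ y ⬝ᵥ (Bmat W).mulVec y ∧
      y ⬝ᵥ (Bmat W).mulVec y ≤ ∑ i, 2 * (1 - W i i) * y i ^ 2 := by
  rw [aux_B]
  obtain ⟨r1, r2⟩ := aux_rows W hWsymm hr (fun i => y i ^ 2)
  have ep : ∑ i, ∑ j, W i j * (y i + y j) ^ 2
      = 2 * ∑ i, y i ^ 2 + 2 * ∑ i, ∑ j, W i j * (y i * y j) := by
    have : ∀ i j, W i j * (y i + y j) ^ 2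
      = W i j * y i ^ 2 + W i j * y j ^ 2 + 2 * (W i j * (y i * y j)) := by intros; ring
    simp only [this, Finset.sum_add_distrib, ← Finset.mul_sum]
    rw [r2]
    linarith
  have em : ∑ i, ∑ j, W i j * (y i - y j) ^ 2
      = 2 * ∑ i, y i ^ 2 - 2 * ∑ i, ∑ j, W i j * (y i * y j) := by
    have : ∀ i j, W i j * (y i - y j) ^ 2
      = W i j * y i ^ 2 + W i j * y j ^ 2 - 2 * (W i j * (y i * y j)) := by intros; ring
    simp only [this, Finset.sum_add_distrib, Finset.sum_sub_distrib, ← Finset.mul_sum]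
    rw [r2]
    linarith
  have hm : 0 ≤ ∑ i, ∑ j, W i j * (y i - y j) ^ 2 :=
    Finset.sum_nonneg fun i _ => Finset.sum_nonneg fun j _ =>
      mul_nonneg (hWnonneg i j) (sq_nonneg _)
  have hpl : ∑ i, W i i * (y i + y i) ^ 2 ≤ ∑ i, ∑ j, W i j * (y i + y j) ^ 2 :=
    Finset.sum_le_sum fun i _ =>
      Finset.single_le_sum (f := fun j => W i j * (y i + y j) ^ 2)
        (fun j _ => mul_nonneg (hWnonneg i j) (sq_nonneg _)) (Finset.mem_univ i)
  have e1 : ∑ i, W i i * (y i + y i) ^ 2 = 4 * ∑ i, W i i * y i ^ 2 := by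
    rw [Finset.mul_sum]; exact Finset.sum_congr rfl fun i _ => by ring
  have e2 : ∑ i, (1 - 2 * W i i) * (y i * y i) = ∑ i, y i ^ 2 - 2 * ∑ i, W i i * y i ^ 2 := by
    rw [Finset.mul_sum, ← Finset.sum_sub_distrib]; exact Finset.sum_congr rfl fun i _ => by ring
  have e3 : ∑ i, 2 * (1 - W i i) * y i ^ 2
      = 2 * ∑ i, y i ^ 2 - 2 * ∑ i, W i i * y i ^ 2 := by
    rw [Finset.mul_sum, Finset.mul_sum, ← Finset.sum_sub_distrib]
    exact Finset.sum_congr rfl fun i _ => by ring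
  rw [e2, e3]
  constructor <;> linarith

lemma aux_H {n : ℕ} (W : Matrix (Fin n) (Fin n) ℝ) (f : Fin n → ℝ → ℝ) (α : ℝ)
    (x : Fin n → ℝ) (hd : ∀ i, 0 < dEntry W f α x i) (u v : Fin n → ℝ) :
    u ⬝ᵥ (Hhatinv W f α x).mulVec v
      = ∑ i, u i * v i / dEntry W f α x i
        + (fun i => u i / dEntry W f α x i) ⬝ᵥ
            (Bmat W).mulVec (fun i => v i / dEntry W f α x i) := by
  have hs : ∀ i, (√(dEntry W f α x i))⁻¹ * (√(dEntry W f α x i))⁻¹ = (dEntry W f α x i)⁻¹ := by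
    intro i
    rw [← mul_inv, Real.mul_self_sqrt (hd i).le]
  have hDD : Dinvhalf W f α x * Dinvhalf W f α x = diagonal (fun i => (dEntry W f α x i)⁻¹) := by
    unfold Dinvhalf
    rw [diagonal_mul_diagonal]
    simp only [hs]
  have hH : Hhatinv W f α x = diagonal (fun i => (dEntry W f α x i)⁻¹)
      + diagonal (fun i => (dEntry W f α x i)⁻¹) * Bmat W *
        diagonal (fun i => (dEntry W f α x i)⁻¹) := by
    rw [← hDD]; unfold Hhatinv
    noncomm_ring
  rw [hH, add_mulVec, dotProduct_add, ← mulVec_mulVec, ← mulVec_mulVec]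
  have hdv : (diagonal (fun i => (dEntry W f α x i)⁻¹)).mulVec v
      = fun i => v i / dEntry W f α x i := by
    funext i; rw [mulVec_diagonal]; ring
  rw [hdv]
  congr 1
  · exact Finset.sum_congr rfl fun i _ => by ring
  · exact Finset.sum_congr rfl fun i _ => by rw [mulVec_diagonal]; ring

lemma aux_F {n : ℕ} (W : Matrix (Fin n) (Fin n) ℝ) (hWsymm : W.IsSymm)
    (f : Fin n → ℝ → ℝ) (hf : ∀ i, ContDiff ℝ 2 (f i)) (M : ℝ)
    (hM : ∀ i s, d2 f i s ≤ M) (α : ℝ) (hα : 0 < α) (x : Fin n → ℝ) (i : Fin n) (t : ℝ) :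
    Fobj W f α (Function.update x i (x i + t)) ≤ Fobj W f α x + t * gvec W f α x i
      + ((1 - W i i) + α * M) / 2 * t ^ 2 := by
  have hu : Function.update x i (x i + t) = x + Pi.single i t := by
    funext j
    by_cases h : j = i
    · subst h; simp
    · simp [h]
  have hsum : ∑ j, f j (Function.update x i (x i + t) j)
      = ∑ j, f j (x j) + (f i (x i + t) - f i (x i)) := by
    rw [← sub_eq_iff_eq_add', ← Finset.sum_sub_distrib, Finset.sum_eq_single i]
    · simp
    · intro j _ h; simp [h]
    · simp
  have hs : (1 - W).IsSymm := by
    unfold Matrix.IsSymm; rw [transpose_sub, transpose_one, hWsymm]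
  have hq : (x + Pi.single i t) ⬝ᵥ (1 - W).mulVec (x + Pi.single i t)
      = x ⬝ᵥ (1 - W).mulVec x + 2 * t * (1 - W).mulVec x i + (1 - W i i) * t ^ 2 := by
    have h1 : x ⬝ᵥ (1 - W).mulVec (Pi.single i t) = t * (1 - W).mulVec x i := by
      rw [dotProduct_mulVec, dotProduct_single, ← mulVec_transpose, hs]; ring
    have h2 : (1 - W).mulVec (Pi.single i t) i = t * (1 - W i i) := by
      simp [mulVec_single]; ring
    rw [mulVec_add, add_dotProduct, dotProduct_add, dotProduct_add, single_dotProduct,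
      single_dotProduct, h1, h2]
    ring
  have ht := aux_tangent (f i) (hf i) M (hM i) (x i) t
  unfold Fobj gvec
  rw [hsum, hu, hq]
  have := mul_le_mul_of_nonneg_left ht hα.le
  nlinarith

/-- Expected one-step descent: if `0 < ε ≤ 2π(λ/Λ)²` then
`Σᵢ pᵢ F(x^(i)) ≤ F(x) − (ελ − ε²Λ²/(2λπ))‖g(x)‖²`, and the coefficient is nonnegative. -/
theorem stmt5 (n : ℕ) (hn : 1 ≤ n)
    (W : Matrix (Fin n) (Fin n) ℝ) (hWsymm : W.IsSymm)
    (hWnonneg : ∀ i j, 0 ≤ W i j) (hWlt : ∀ i j, W i j < 1)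
    (hWone : W.mulVec (fun _ => 1) = fun _ => 1)
    (hWnull : ∀ x : Fin n → ℝ, ((1 - W).mulVec x = 0 ↔ ∃ c : ℝ, x = fun _ => c))
    (δ Δ : ℝ) (hδ : 0 < δ) (hδΔ : δ ≤ Δ) (hΔ : Δ < 1)
    (hWdiag : ∀ i, δ ≤ W i i ∧ W i i ≤ Δ)
    (f : Fin n → ℝ → ℝ) (hf : ∀ i, ContDiff ℝ 2 (f i))
    (hconv : ∀ i, ConvexOn ℝ Set.univ (f i))
    (m M : ℝ) (hm : 0 < m) (hmM : m ≤ M)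
    (hd2 : ∀ i s, m ≤ d2 f i s ∧ d2 f i s ≤ M)
    (α : ℝ) (hα : 0 < α)
    (p : Fin n → ℝ) (pmin pmax : ℝ) (hpmin : 0 < pmin) (hpmax : pmax < 1)
    (hp : ∀ i, pmin ≤ p i ∧ p i ≤ pmax) (hpsum : ∑ i, p i = 1)
    (ρ lam Lam : ℝ) (hρ : ρ = 2 * (1 - δ) / (2 * (1 - δ) + α * m))
    (hlam : lam = 1 / (2 * (1 - δ) + α * M))
    (hLam : Lam = (1 + ρ) / (2 * (1 - Δ) + α * m))
    (ε : ℝ) (hε : 0 < ε) (hεle : ε ≤ 2 * pmin * (lam / Lam) ^ 2) :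
    0 ≤ ε * lam - ε ^ 2 * Lam ^ 2 / (2 * lam * pmin) ∧
    ∀ x : Fin n → ℝ,
      ∑ i, p i * Fobj W f α (upd W f α p ε x i) ≤
        Fobj W f α x
          - (ε * lam - ε ^ 2 * Lam ^ 2 / (2 * lam * pmin)) * ∑ i, gvec W f α x i ^ 2 := by
  have h1δ : 0 < 1 - δ := by linarith
  have h1Δ : 0 < 1 - Δ := by linarith
  have hM : 0 < M := by linarith
  have hαm : 0 < α * m := by positivity
  have hαM : 0 < α * M := by positivity
  have hden : 0 < 2 * (1 - δ) + α * M := by linarith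
  have hlam0 : 0 < lam := by rw [hlam]; positivity
  have hρ0 : 0 < ρ := by rw [hρ]; positivity
  have hLam0 : 0 < Lam := by rw [hLam]; positivity
  constructor
  · have e : ε * lam - ε ^ 2 * Lam ^ 2 / (2 * lam * pmin)
      = ε * Lam ^ 2 / (2 * lam * pmin) * (2 * pmin * (lam / Lam) ^ 2 - ε) := by
      field_simp
    rw [e]
    exact mul_nonneg (by positivity) (by linarith)
  intro x
  have hr : ∀ i, ∑ j, W i j = 1 := fun i => by
    have := congrFun hWone i
    simpa [mulVec, dotProduct] using this
  have hdlow : ∀ i, 2 * (1 - W i i) + α * m ≤ dEntry W f α x i := fun i => by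
    unfold dEntry
    have := mul_le_mul_of_nonneg_left (hd2 i (x i)).1 hα.le
    linarith
  have hdlow' : ∀ i, 2 * (1 - Δ) + α * m ≤ dEntry W f α x i := fun i => by
    linarith [hdlow i, (hWdiag i).2]
  have hdhigh : ∀ i, dEntry W f α x i ≤ 2 * (1 - δ) + α * M := fun i => by
    unfold dEntry
    have := mul_le_mul_of_nonneg_left (hd2 i (x i)).2 hα.le
    linarith [(hWdiag i).1]
  have hd : ∀ i, 0 < dEntry W f α x i := fun i => by linarith [hdlow' i]
  have hρd : ∀ i, 2 * (1 - W i i) ≤ ρ * dEntry W f α x i := fun i => by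
    have h1 := mul_le_mul_of_nonneg_left (hdlow i) hρ0.le
    refine le_trans ?_ h1
    rw [hρ, div_mul_eq_mul_div, le_div_iff₀ (by positivity)]
    nlinarith [(hWdiag i).1]
  have hlow : ∀ u, lam * (u ⬝ᵥ u) ≤ u ⬝ᵥ (Hhatinv W f α x).mulVec u := fun u => by
    rw [aux_H W f α x hd]
    have := (aux_Bbd W hWsymm hWnonneg hr (fun i => u i / dEntry W f α x i)).1
    have h2 : lam * (u ⬝ᵥ u) ≤ ∑ i, u i * u i / dEntry W f α x i := by
      rw [dotProduct, Finset.mul_sum]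
      refine Finset.sum_le_sum fun i _ => ?_
      rw [hlam, one_div_mul_eq_div]
      exact div_le_div_of_nonneg_left (mul_self_nonneg _) (hd i) (hdhigh i)
    linarith
  have hhigh : ∀ u, u ⬝ᵥ (Hhatinv W f α x).mulVec u ≤ Lam * (u ⬝ᵥ u) := fun u => by
    rw [aux_H W f α x hd]
    have h1 := (aux_Bbd W hWsymm hWnonneg hr (fun i => u i / dEntry W f α x i)).2
    refine le_trans (add_le_add_right h1 _) ?_
    rw [dotProduct, Finset.mul_sum, ← Finset.sum_add_distrib]
    refine Finset.sum_le_sum fun i _ => ?_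
    have hdi := hd i
    have h2 : 2 * (1 - W i i) * (u i / dEntry W f α x i) ^ 2
        ≤ ρ * (u i * u i / dEntry W f α x i) := by
      have := mul_le_mul_of_nonneg_right (hρd i) (sq_nonneg (u i / dEntry W f α x i))
      refine this.trans (le_of_eq ?_)
      field_simp
    have h3 : u i * u i / dEntry W f α x i ≤ u i * u i / (2 * (1 - Δ) + α * m) :=
      div_le_div_of_nonneg_left (mul_self_nonneg _) (by positivity) (hdlow' i)
    have h4 : Lam * (u i * u i) = (1 + ρ) * (u i * u i / (2 * (1 - Δ) + α * m)) := by
      rw [hLam]; ring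
    rw [h4]
    nlinarith
  have hBs : ∀ y z, y ⬝ᵥ (Bmat W).mulVec z = z ⬝ᵥ (Bmat W).mulVec y := fun y z => by
    rw [aux_B, aux_B]
    congr 1
    · exact Finset.sum_congr rfl fun i _ => by ring
    · rw [Finset.sum_comm]
      exact Finset.sum_congr rfl fun i _ => Finset.sum_congr rfl fun j _ => by
        rw [hWsymm.apply]; ring
  have hHs : ∀ u v, u ⬝ᵥ (Hhatinv W f α x).mulVec v = v ⬝ᵥ (Hhatinv W f α x).mulVec u :=
    fun u v => by
      rw [aux_H W f α x hd, aux_H W f α x hd, hBs]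
      congr 1
      exact Finset.sum_congr rfl fun i _ => by ring
  have hself : ∀ u : Fin n → ℝ, u ⬝ᵥ u = ∑ i, u i ^ 2 := fun u =>
    Finset.sum_congr rfl fun i _ => by ring
  have hnn : ∀ u, 0 ≤ u ⬝ᵥ (Hhatinv W f α x).mulVec u := fun u => by
    refine le_trans ?_ (hlow u)
    rw [hself]; positivity
  set g := gvec W f α x with hg
  have hv := aux_psd _ hHs Lam hLam0 hnn hhigh g
  have hl := hlow g
  set v := (Hhatinv W f α x).mulVec g with hvdef
  have hstep : ∀ i, p i * Fobj W f α (upd W f α p ε x i) ≤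
      p i * Fobj W f α x - ε * (g i * v i) + ε ^ 2 / (2 * lam * pmin) * (v i * v i) := by
    intro i
    have hpi : 0 < p i := lt_of_lt_of_le hpmin (hp i).1
    have h := aux_F W hWsymm f hf M (fun i s => (hd2 i s).2) α hα x i (-(ε / p i * v i))
    have hL : (1 - W i i) + α * M ≤ 1 / lam := by
      rw [hlam, one_div_one_div]; linarith [(hWdiag i).1]
    unfold upd
    rw [← hg, ← hvdef, sub_eq_add_neg]
    refine (mul_le_mul_of_nonneg_left h hpi.le).trans ?_
    have h5 : p i * (((1 - W i i) + α * M) / 2 * (-(ε / p i * v i)) ^ 2)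
        ≤ ε ^ 2 / (2 * lam * pmin) * (v i * v i) := by
      have e1 : p i * (((1 - W i i) + α * M) / 2 * (-(ε / p i * v i)) ^ 2)
        = ((1 - W i i) + α * M) * (1 / p i) * (ε ^ 2 / 2 * (v i * v i)) := by field_simp
      have e2 : ε ^ 2 / (2 * lam * pmin) * (v i * v i)
        = (1 / lam) * (1 / pmin) * (ε ^ 2 / 2 * (v i * v i)) := by field_simp
      rw [e1, e2]
      refine mul_le_mul_of_nonneg_right ?_
        (mul_nonneg (by positivity) (mul_self_nonneg _))
      exact mul_le_mul hL (one_div_le_one_div_of_le hpmin (hp i).1) (by positivity) (by positivity)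
    have h6 : p i * (-(ε / p i * v i) * g i) = - (ε * (g i * v i)) := by field_simp
    rw [← hg, mul_add, mul_add, h6]
    linarith
  refine (Finset.sum_le_sum fun i _ => hstep i).trans ?_
  rw [Finset.sum_add_distrib, Finset.sum_sub_distrib, ← Finset.sum_mul, hpsum, ← Finset.mul_sum,
    ← Finset.mul_sum, one_mul]
  change Fobj W f α x - ε * (g ⬝ᵥ v) + ε ^ 2 / (2 * lam * pmin) * (v ⬝ᵥ v) ≤ _
  rw [← hself]
  have a1 := mul_le_mul_of_nonneg_left hl hε.le
  have a2 := mul_le_mul_of_nonneg_left hv (show 0 ≤ ε ^ 2 / (2 * lam * pmin) by positivity)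
  have a3 : (ε * lam - ε ^ 2 * Lam ^ 2 / (2 * lam * pmin)) * (g ⬝ᵥ g)
    = ε * (lam * (g ⬝ᵥ g)) - ε ^ 2 / (2 * lam * pmin) * (Lam ^ 2 * (g ⬝ᵥ g)) := by ring
  rw [a3]
  linarith
end
end

section
/- If the stepsize parameter satisfies 0 < ε < min{1/2, 2π(λ/Λ)²}, then the asynchronous network Newton iterates converge linearly in expectation in function value: for all t ≥ 0, E[F(x(t)) − F*] ≤ (1 − β)^t (F(x(0)) − F*), where β = αmε(2πλ² − εΛ²)/(λπ). -/
open Matrix BigOperators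

noncomputable section

/-- Tangent line inequality from a nonnegative second derivative. -/
lemma tangent_ineq {φ dphi ddphi : ℝ → ℝ} (h1 : ∀ s, HasDerivAt φ (dphi s) s)
    (h2 : ∀ s, HasDerivAt dphi (ddphi s) s) (h3 : ∀ s, 0 ≤ ddphi s) (x y : ℝ) :
    φ x + dphi x * (y - x) ≤ φ y := by
  have e1 : deriv φ = dphi := funext fun s => (h1 s).deriv
  have e2 : deriv dphi = ddphi := funext fun s => (h2 s).deriv
  have hc : ConvexOn ℝ Set.univ φ := by
    apply convexOn_univ_of_deriv2_nonneg (fun s => (h1 s).differentiableAt)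
    · rw [e1]; exact fun s => (h2 s).differentiableAt
    · intro s
      simp only [Function.iterate_succ, Function.iterate_zero, Function.comp, id, e1, e2]
      exact h3 s
  rcases lt_trichotomy x y with h | h | h
  · have := hc.le_slope_of_hasDerivAt (Set.mem_univ x) (Set.mem_univ y) h (h1 x)
    rw [slope_def_field, le_div_iff₀ (by linarith)] at this
    linarith
  · subst h; simp
  · have := hc.slope_le_of_hasDerivAt (Set.mem_univ y) (Set.mem_univ x) h (h1 x)
    rw [slope_def_field, div_le_iff₀ (by linarith)] at this
    linarith

lemma scalar_bounds {φ : ℝ → ℝ} (hφ : ContDiff ℝ 2 φ) {m M : ℝ}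
    (h : ∀ s, m ≤ deriv (deriv φ) s ∧ deriv (deriv φ) s ≤ M) (x v : ℝ) :
    φ x + deriv φ x * v + m / 2 * v ^ 2 ≤ φ (x + v) ∧
    φ (x + v) ≤ φ x + deriv φ x * v + M / 2 * v ^ 2 := by
  have d1 : ∀ s, HasDerivAt φ (deriv φ s) s := fun s =>
    (hφ.differentiable (by norm_num) s).hasDerivAt
  have d2 : ∀ s, HasDerivAt (deriv φ) (deriv (deriv φ) s) s := fun s => by
    have h2 : ContDiff ℝ (1 + 1) φ := by simpa [one_add_one_eq_two] using hφ
    have := (contDiff_succ_iff_deriv.1 h2).2.2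
    exact (this.differentiable (by norm_num) s).hasDerivAt
  have q1 : ∀ c s : ℝ, HasDerivAt (fun s : ℝ => c / 2 * s ^ 2) (c * s) s := fun c s => by
    have := (hasDerivAt_pow 2 s).const_mul (c / 2)
    exact this.congr_deriv (by norm_num; ring)
  have q2 : ∀ c s : ℝ, HasDerivAt (fun s : ℝ => c * s) c s := fun c s => by
    simpa using (hasDerivAt_id s).const_mul c
  constructor
  · have := tangent_ineq (fun s => (d1 s).sub (q1 m s)) (fun s => (d2 s).sub (q2 m s))
      (fun s => by linarith [(h s).1]) x (x + v)
    simp only [Pi.sub_apply] at this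
    nlinarith [this]
  · have := tangent_ineq (fun s => (q1 M s).sub (d1 s)) (fun s => (q2 M s).sub (d2 s))
      (fun s => by linarith [(h s).2]) x (x + v)
    simp only [Pi.sub_apply] at this
    nlinarith [this]

/-- Off-diagonal part of `W`. -/
def Noff {n : ℕ} (W : Matrix (Fin n) (Fin n) ℝ) : Matrix (Fin n) (Fin n) ℝ :=
  W - Matrix.diagonal (fun i => W i i)

lemma one_sub_eq {n : ℕ} (W : Matrix (Fin n) (Fin n) ℝ) :
    1 - W = Matrix.diagonal (fun i => 1 - W i i) - Noff W := by
  ext i j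
  by_cases h : i = j
  · subst h; simp [Noff]
  · simp [Noff, h]

lemma Bmat_eq {n : ℕ} (W : Matrix (Fin n) (Fin n) ℝ) :
    Bmat W = Matrix.diagonal (fun i => 1 - W i i) + Noff W := by
  ext i j
  by_cases h : i = j
  · subst h; simp [Noff, Bmat]; ring
  · simp [Noff, Bmat, h]

lemma quad_off {n : ℕ} {W : Matrix (Fin n) (Fin n) ℝ} (hWsymm : W.IsSymm)
    (hWnonneg : ∀ i j, 0 ≤ W i j) (hWone : W.mulVec (fun _ => 1) = fun _ => 1)
    (v : Fin n → ℝ) :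
    |v ⬝ᵥ (Noff W).mulVec v| ≤ ∑ i, (1 - W i i) * v i ^ 2 := by
  have hN0 : ∀ i j, 0 ≤ Noff W i j := by
    intro i j
    by_cases h : i = j
    · subst h; simp [Noff]
    · simp [Noff, h, hWnonneg]
  have hNs : ∀ i j, Noff W i j = Noff W j i := by
    intro i j
    by_cases h : i = j
    · subst h; rfl
    · simp [Noff, h, Ne.symm h, hWsymm.apply j i]
  have hrow : ∀ i, ∑ j, Noff W i j = 1 - W i i := by
    intro i
    have := congrFun hWone i
    simp only [Matrix.mulVec, dotProduct, mul_one] at this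
    simp [Noff, Finset.sum_sub_distrib, this, Matrix.diagonal_apply]
  have e1 : ∑ i, (1 - W i i) * v i ^ 2 = ∑ i, ∑ j, Noff W i j * v i ^ 2 := by
    simp_rw [← Finset.sum_mul, hrow]
  have e2 : ∑ i, (1 - W i i) * v i ^ 2 = ∑ i, ∑ j, Noff W i j * v j ^ 2 := by
    rw [e1, Finset.sum_comm]
    refine Finset.sum_congr rfl fun i _ => Finset.sum_congr rfl fun j _ => ?_
    rw [hNs]
  have e3 : ∑ i, (1 - W i i) * v i ^ 2
      = ∑ i, ∑ j, Noff W i j * ((v i ^ 2 + v j ^ 2) / 2) := by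
    have : ∑ i, ∑ j, Noff W i j * ((v i ^ 2 + v j ^ 2) / 2)
      = (∑ i, ∑ j, Noff W i j * v i ^ 2 + ∑ i, ∑ j, Noff W i j * v j ^ 2) / 2 := by
      simp_rw [← Finset.sum_add_distrib, Finset.sum_div]
      refine Finset.sum_congr rfl fun i _ => Finset.sum_congr rfl fun j _ => ?_
      ring
    rw [this, ← e1, ← e2]; ring
  have e4 : v ⬝ᵥ (Noff W).mulVec v = ∑ i, ∑ j, Noff W i j * (v i * v j) := by
    simp only [Matrix.mulVec, dotProduct, Finset.mul_sum]
    refine Finset.sum_congr rfl fun i _ => Finset.sum_congr rfl fun j _ => ?_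
    ring
  rw [e3, e4, abs_le, ← Finset.sum_neg_distrib]
  constructor
  · refine Finset.sum_le_sum fun i _ => ?_
    rw [← Finset.sum_neg_distrib]
    refine Finset.sum_le_sum fun j _ => ?_
    nlinarith [mul_nonneg (hN0 i j) (sq_nonneg (v i + v j))]
  · refine Finset.sum_le_sum fun i _ => Finset.sum_le_sum fun j _ => ?_
    nlinarith [mul_nonneg (hN0 i j) (sq_nonneg (v i - v j))]

lemma diag_quad {n : ℕ} (c v : Fin n → ℝ) :
    v ⬝ᵥ (Matrix.diagonal c).mulVec v = ∑ i, c i * v i ^ 2 := by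
  simp only [Matrix.mulVec_diagonal, dotProduct]
  exact Finset.sum_congr rfl fun i _ => by ring

/-- A symmetric matrix with `0 ⪯ A ⪯ L` satisfies `‖A g‖² ≤ L² ‖g‖²`. -/
lemma norm_bound {n : ℕ} {A : Matrix (Fin n) (Fin n) ℝ} (hA : A.IsSymm) {L : ℝ} (hL : 0 < L)
    (h0 : ∀ v : Fin n → ℝ, 0 ≤ v ⬝ᵥ A.mulVec v)
    (h1 : ∀ v : Fin n → ℝ, v ⬝ᵥ A.mulVec v ≤ L * (v ⬝ᵥ v)) (g : Fin n → ℝ) :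
    A.mulVec g ⬝ᵥ A.mulVec g ≤ L ^ 2 * (g ⬝ᵥ g) := by
  set v := A.mulVec g with hv
  have hs : g ⬝ᵥ A.mulVec v = v ⬝ᵥ v := by
    rw [Matrix.dotProduct_mulVec, ← Matrix.mulVec_transpose, hA.eq]
  have hq := h0 (L • g - v)
  rw [Matrix.mulVec_sub, Matrix.mulVec_smul, ← hv] at hq
  simp only [sub_dotProduct, dotProduct_sub, smul_dotProduct, dotProduct_smul, smul_eq_mul, hs] at hq
  have hb := h1 v
  have hc := h1 g
  rw [← hv] at hc
  have : 0 ≤ L * (L * (g ⬝ᵥ v) - v ⬝ᵥ v) := by nlinarith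
  have := nonneg_of_mul_nonneg_right this hL
  nlinarith

lemma Hhat_mulVec {n : ℕ} (W : Matrix (Fin n) (Fin n) ℝ) (f : Fin n → ℝ → ℝ) (α : ℝ)
    (x : Fin n → ℝ) (hd : ∀ i, 0 < dEntry W f α x i) (g : Fin n → ℝ) :
    g ⬝ᵥ (Hhatinv W f α x).mulVec g = ∑ i, (dEntry W f α x i)⁻¹ * g i ^ 2 +
      (fun i => (dEntry W f α x i)⁻¹ * g i) ⬝ᵥ
        (Bmat W).mulVec (fun i => (dEntry W f α x i)⁻¹ * g i) := by
  have hsq : ∀ i, (Real.sqrt (dEntry W f α x i))⁻¹ * (Real.sqrt (dEntry W f α x i))⁻¹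
      = (dEntry W f α x i)⁻¹ := fun i => by
    rw [← mul_inv, Real.mul_self_sqrt (hd i).le]
  have e : Hhatinv W f α x = Matrix.diagonal (fun i => (dEntry W f α x i)⁻¹) +
      Matrix.diagonal (fun i => (dEntry W f α x i)⁻¹) * Bmat W *
        Matrix.diagonal (fun i => (dEntry W f α x i)⁻¹) := by
    have hD : Dinvhalf W f α x * Dinvhalf W f α x
        = Matrix.diagonal (fun i => (dEntry W f α x i)⁻¹) := by
      simp only [Dinvhalf, Matrix.diagonal_mul_diagonal, hsq]
    rw [← hD, Hhatinv]
    noncomm_ring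
  have hm : ∀ v : Fin n → ℝ, (Matrix.diagonal (fun i => (dEntry W f α x i)⁻¹)).mulVec v
      = fun i => (dEntry W f α x i)⁻¹ * v i := fun v => by
    ext i; rw [Matrix.mulVec_diagonal]
  rw [e, Matrix.add_mulVec, dotProduct_add, diag_quad, ← Matrix.mulVec_mulVec,
    ← Matrix.mulVec_mulVec, hm g, hm]
  congr 1
  simp only [dotProduct]
  exact Finset.sum_congr rfl fun i _ => by ring

lemma Hhat_symm {n : ℕ} {W : Matrix (Fin n) (Fin n) ℝ} (hW : W.IsSymm) (f : Fin n → ℝ → ℝ)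
    (α : ℝ) (x : Fin n → ℝ) : (Hhatinv W f α x).IsSymm := by
  unfold Matrix.IsSymm Hhatinv Bmat Dinvhalf
  simp [Matrix.transpose_mul, hW.eq, Matrix.mul_assoc]

lemma Fobj_expand {n : ℕ} {W : Matrix (Fin n) (Fin n) ℝ} (hW : W.IsSymm) (f : Fin n → ℝ → ℝ)
    (α : ℝ) (x v : Fin n → ℝ) :
    Fobj W f α (x + v) = Fobj W f α x + gvec W f α x ⬝ᵥ v + 1 / 2 * (v ⬝ᵥ (1 - W).mulVec v) +
      α * ∑ i, (f i (x i + v i) - f i (x i) - deriv (f i) (x i) * v i) := by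
  have hs : x ⬝ᵥ (1 - W).mulVec v = v ⬝ᵥ (1 - W).mulVec x := by
    rw [Matrix.dotProduct_mulVec, ← Matrix.mulVec_transpose]
    simp [hW.eq, dotProduct_comm]
  have hg : gvec W f α x ⬝ᵥ v = v ⬝ᵥ (1 - W).mulVec x + α * ∑ i, deriv (f i) (x i) * v i := by
    simp only [gvec, dotProduct, Finset.mul_sum, ← Finset.sum_add_distrib]
    exact Finset.sum_congr rfl fun i _ => by ring
  simp only [Fobj, hg, Matrix.mulVec_add, dotProduct_add, add_dotProduct, hs, Pi.add_apply,
    Finset.sum_sub_distrib]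
  ring

set_option maxHeartbeats 2000000 in
/-- One-step expected contraction. -/
lemma one_step (n : ℕ)
    (W : Matrix (Fin n) (Fin n) ℝ) (hWsymm : W.IsSymm)
    (hWnonneg : ∀ i j, 0 ≤ W i j)
    (hWone : W.mulVec (fun _ => 1) = fun _ => 1)
    (δ Δ : ℝ) (hδΔ : δ ≤ Δ) (hΔ : Δ < 1)
    (hWdiag : ∀ i, δ ≤ W i i ∧ W i i ≤ Δ)
    (f : Fin n → ℝ → ℝ) (hf : ∀ i, ContDiff ℝ 2 (f i))
    (m M : ℝ) (hm : 0 < m) (hmM : m ≤ M)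
    (hd2 : ∀ i s, m ≤ d2 f i s ∧ d2 f i s ≤ M)
    (α : ℝ) (hα : 0 < α)
    (p : Fin n → ℝ) (pmin : ℝ) (hpmin : 0 < pmin)
    (hp : ∀ i, pmin ≤ p i) (hpsum : ∑ i, p i = 1)
    (xstar : Fin n → ℝ)
    (ρ lam Lam : ℝ) (hρ : ρ = 2 * (1 - δ) / (2 * (1 - δ) + α * m))
    (hlam : lam = 1 / (2 * (1 - δ) + α * M))
    (hLam : Lam = (1 + ρ) / (2 * (1 - Δ) + α * m))
    (ε : ℝ) (hε : 0 < ε) (hεlt : ε < 2 * pmin * (lam / Lam) ^ 2)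
    (β : ℝ) (hβ : β = α * m * ε * (2 * pmin * lam ^ 2 - ε * Lam ^ 2) / (lam * pmin))
    (x : Fin n → ℝ) :
    ∑ i, p i * (Fobj W f α (upd W f α p ε x i) - Fobj W f α xstar) ≤
      (1 - β) * (Fobj W f α x - Fobj W f α xstar) := by
  have ham : 0 < α * m := mul_pos hα hm
  have haM : α * m ≤ α * M := mul_le_mul_of_nonneg_left hmM hα.le
  have hρ0 : 0 < ρ := by rw [hρ]; apply div_pos <;> linarith
  have hlam0 : 0 < lam := by rw [hlam]; apply div_pos <;> linarith
  have hLam0 : 0 < Lam := by rw [hLam]; apply div_pos <;> linarith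
  have hdl : ∀ i, 2 * (1 - Δ) + α * m ≤ dEntry W f α x i := fun i => by
    have := mul_le_mul_of_nonneg_left (hd2 i (x i)).1 hα.le
    unfold dEntry; linarith [(hWdiag i).2]
  have hdu : ∀ i, dEntry W f α x i ≤ 2 * (1 - δ) + α * M := fun i => by
    have := mul_le_mul_of_nonneg_left (hd2 i (x i)).2 hα.le
    unfold dEntry; linarith [(hWdiag i).1]
  have hd0 : ∀ i, 0 < dEntry W f α x i := fun i => by linarith [hdl i]
  have hel : ∀ i, lam ≤ (dEntry W f α x i)⁻¹ := fun i => by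
    rw [hlam, one_div]; exact inv_anti₀ (hd0 i) (hdu i)
  have hBq : ∀ v : Fin n → ℝ, 0 ≤ v ⬝ᵥ (Bmat W).mulVec v ∧
      v ⬝ᵥ (Bmat W).mulVec v ≤ ∑ i, 2 * (1 - W i i) * v i ^ 2 := fun v => by
    have := abs_le.1 (quad_off hWsymm hWnonneg hWone v)
    rw [Bmat_eq, Matrix.add_mulVec, dotProduct_add, diag_quad]
    simp only [mul_assoc, ← Finset.mul_sum]
    constructor <;> linarith [this.1, this.2]
  have hLq : ∀ v : Fin n → ℝ, 0 ≤ v ⬝ᵥ (1 - W).mulVec v ∧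
      v ⬝ᵥ (1 - W).mulVec v ≤ 2 * (1 - δ) * ∑ i, v i ^ 2 := fun v => by
    have := abs_le.1 (quad_off hWsymm hWnonneg hWone v)
    have h2 : ∑ i, (1 - W i i) * v i ^ 2 ≤ (1 - δ) * ∑ i, v i ^ 2 := by
      rw [Finset.mul_sum]
      exact Finset.sum_le_sum fun i _ =>
        mul_le_mul_of_nonneg_right (by linarith [(hWdiag i).1]) (sq_nonneg _)
    rw [one_sub_eq, Matrix.sub_mulVec, dotProduct_sub, diag_quad]
    constructor <;> linarith [this.1, this.2]
  have hdot : ∀ v : Fin n → ℝ, v ⬝ᵥ v = ∑ i, v i ^ 2 := fun v => by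
    simp only [dotProduct, pow_two]
  -- spectral bounds for the approximate inverse Hessian
  have hAl : ∀ v : Fin n → ℝ, lam * (v ⬝ᵥ v) ≤ v ⬝ᵥ (Hhatinv W f α x).mulVec v := fun v => by
    rw [Hhat_mulVec W f α x hd0, hdot, Finset.mul_sum]
    have h1 := (hBq (fun i => (dEntry W f α x i)⁻¹ * v i)).1
    have h2 : ∑ i, lam * v i ^ 2 ≤ ∑ i, (dEntry W f α x i)⁻¹ * v i ^ 2 :=
      Finset.sum_le_sum fun i _ => mul_le_mul_of_nonneg_right (hel i) (sq_nonneg _)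
    linarith
  have hAu : ∀ v : Fin n → ℝ, v ⬝ᵥ (Hhatinv W f α x).mulVec v ≤ Lam * (v ⬝ᵥ v) := fun v => by
    rw [Hhat_mulVec W f α x hd0, hdot, Finset.mul_sum]
    have h1 := (hBq (fun i => (dEntry W f α x i)⁻¹ * v i)).2
    refine (add_le_add_right h1 _).trans ?_
    rw [← Finset.sum_add_distrib]
    refine Finset.sum_le_sum fun i _ => ?_
    have hr : 2 * (1 - W i i) * (dEntry W f α x i)⁻¹ ≤ ρ := by
      rw [hρ, ← div_eq_mul_inv, div_le_div_iff₀ (hd0 i) (by linarith)]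
      have a1 := mul_le_mul_of_nonneg_left (hd2 i (x i)).1 hα.le
      have a2 := (hWdiag i).1
      have a3 := (hWdiag i).2
      unfold dEntry
      nlinarith [mul_nonneg (by linarith : (0:ℝ) ≤ 1 - δ) (sub_nonneg.2 a1),
        mul_nonneg ham.le (sub_nonneg.2 a2)]
    have hei : (dEntry W f α x i)⁻¹ ≤ (2 * (1 - Δ) + α * m)⁻¹ :=
      inv_anti₀ (by linarith) (hdl i)
    have he0 : 0 < (dEntry W f α x i)⁻¹ := inv_pos.2 (hd0 i)
    have : (dEntry W f α x i)⁻¹ * (1 + 2 * (1 - W i i) * (dEntry W f α x i)⁻¹) ≤ Lam := by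
      rw [hLam, div_eq_mul_inv, mul_comm (1 + ρ)]
      apply mul_le_mul hei (by linarith) _ (le_trans he0.le hei)
      have : 0 ≤ 2 * (1 - W i i) * (dEntry W f α x i)⁻¹ :=
        mul_nonneg (by linarith [(hWdiag i).2]) he0.le
      linarith
    have := mul_le_mul_of_nonneg_right this (sq_nonneg (v i))
    refine le_trans (le_of_eq ?_) this
    ring
  have hA0 : ∀ v : Fin n → ℝ, 0 ≤ v ⬝ᵥ (Hhatinv W f α x).mulVec v := fun v =>
    le_trans (mul_nonneg hlam0.le (by rw [hdot]; positivity)) (hAl v)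
  set g := gvec W f α x with hg
  set d := (Hhatinv W f α x).mulVec g with hdd
  have hdn : d ⬝ᵥ d ≤ Lam ^ 2 * (g ⬝ᵥ g) := norm_bound (Hhat_symm hWsymm f α x) hLam0 hA0 hAu g
  have hgd : lam * (g ⬝ᵥ g) ≤ g ⬝ᵥ d := hAl g
  have hlinv : 2 * (1 - δ) + α * M = 1 / lam := by rw [hlam, one_div_one_div]
  -- descent lemma
  have hdesc : ∀ v : Fin n → ℝ, Fobj W f α (x + v) ≤ Fobj W f α x + g ⬝ᵥ v +
      1 / lam / 2 * ∑ i, v i ^ 2 := fun v => by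
    rw [Fobj_expand hWsymm, ← hlinv, ← hg]
    have h1 : ∑ i, (f i (x i + v i) - f i (x i) - deriv (f i) (x i) * v i)
        ≤ M / 2 * ∑ i, v i ^ 2 := by
      rw [Finset.mul_sum]
      exact Finset.sum_le_sum fun i _ => by
        linarith [(scalar_bounds (hf i) (hd2 i) (x i) (v i)).2]
    have h2 := mul_le_mul_of_nonneg_left h1 hα.le
    have h3 := (hLq v).2
    linarith
  -- Polyak–Łojasiewicz inequality
  have hPL : 2 * (α * m) * (Fobj W f α x - Fobj W f α xstar) ≤ g ⬝ᵥ g := by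
    have h0 := Fobj_expand hWsymm f α x (xstar - x)
    rw [add_sub_cancel, ← hg] at h0
    set v := xstar - x
    have h1 : m / 2 * ∑ i, v i ^ 2 ≤
        ∑ i, (f i (x i + v i) - f i (x i) - deriv (f i) (x i) * v i) := by
      rw [Finset.mul_sum]
      exact Finset.sum_le_sum fun i _ => by
        linarith [(scalar_bounds (hf i) (hd2 i) (x i) (v i)).1]
    have h2 := mul_le_mul_of_nonneg_left h1 hα.le
    have h3 := (hLq v).1
    have h4 : 0 ≤ g ⬝ᵥ g + 2 * (α * m) * (g ⬝ᵥ v) + (α * m) ^ 2 * ∑ i, v i ^ 2 := by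
      have : g ⬝ᵥ g + 2 * (α * m) * (g ⬝ᵥ v) + (α * m) ^ 2 * ∑ i, v i ^ 2
          = ∑ i, (g i + α * m * v i) ^ 2 := by
        simp only [dotProduct, Finset.mul_sum, ← Finset.sum_add_distrib]
        exact Finset.sum_congr rfl fun i _ => by ring
      rw [this]; positivity
    have h5 : Fobj W f α x - Fobj W f α xstar
        ≤ - (g ⬝ᵥ v) - α * (m / 2 * ∑ i, v i ^ 2) := by linarith
    have h6 := mul_le_mul_of_nonneg_left h5 (by positivity : 0 ≤ 2 * (α * m))
    nlinarith
  -- expected one-step bound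
  have hstep : ∀ i, p i * (Fobj W f α (upd W f α p ε x i) - Fobj W f α xstar) ≤
      p i * (Fobj W f α x - Fobj W f α xstar) - ε * (g i * d i) +
        1 / lam / 2 * (ε ^ 2 / pmin) * d i ^ 2 := fun i => by
    have hpi : 0 < p i := lt_of_lt_of_le hpmin (hp i)
    have hu : upd W f α p ε x i = x + Pi.single i (-(ε / p i * d i)) := by
      ext j
      by_cases h : j = i
      · subst h; simp [upd, hdd, hg, sub_eq_add_neg]
      · simp [upd, h]
    have h1 := hdesc (Pi.single i (-(ε / p i * d i)))
    rw [← hu, dotProduct_single] at h1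
    have h2 : ∑ j, (Pi.single i (-(ε / p i * d i)) : Fin n → ℝ) j ^ 2 = (ε / p i * d i) ^ 2 := by
      rw [Finset.sum_eq_single i]
      · simp
      · intro j _ hj; simp [hj]
      · simp
    rw [h2] at h1
    have h3 := mul_le_mul_of_nonneg_left (sub_le_sub_right h1 (Fobj W f α xstar)) hpi.le
    refine h3.trans ?_
    have h4 : p i * (Fobj W f α x + g i * -(ε / p i * d i) + 1 / lam / 2 * (ε / p i * d i) ^ 2
        - Fobj W f α xstar) = p i * (Fobj W f α x - Fobj W f α xstar) - ε * (g i * d i)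
        + 1 / lam / 2 * (ε ^ 2 / p i) * d i ^ 2 := by
      field_simp
      ring
    rw [h4]
    have h5 : ε ^ 2 / p i ≤ ε ^ 2 / pmin := div_le_div_of_nonneg_left (by positivity) hpmin (hp i)
    have h6 : 0 ≤ 1 / lam / 2 := by positivity
    have := mul_le_mul_of_nonneg_right (mul_le_mul_of_nonneg_left h5 h6) (sq_nonneg (d i))
    linarith
  have hsum := Finset.sum_le_sum fun i (_ : i ∈ Finset.univ) => hstep i
  rw [Finset.sum_add_distrib, Finset.sum_sub_distrib, ← Finset.sum_mul, hpsum, ← Finset.mul_sum,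
    ← Finset.mul_sum, ← hdot d, one_mul] at hsum
  change _ ≤ _ - ε * (g ⬝ᵥ d) + _ at hsum
  refine hsum.trans ?_
  have hcoef : 0 ≤ 1 / lam / 2 * (ε ^ 2 / pmin) := by positivity
  have k1 := mul_le_mul_of_nonneg_left hdn hcoef
  have k2 := mul_le_mul_of_nonneg_left hgd hε.le
  set κ := ε * (2 * pmin * lam ^ 2 - ε * Lam ^ 2) / (lam * pmin) with hκ
  have hβκ : β = α * m * κ := by rw [hβ, hκ]; ring
  have hκ0 : 0 ≤ κ := by
    have : ε * Lam ^ 2 ≤ 2 * pmin * lam ^ 2 := by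
      rw [div_pow, ← mul_div_assoc, lt_div_iff₀ (by positivity)] at hεlt
      exact hεlt.le
    rw [hκ]
    apply div_nonneg (mul_nonneg hε.le (by linarith)) (by positivity)
  have k3 : ε * (lam * (g ⬝ᵥ g)) - 1 / lam / 2 * (ε ^ 2 / pmin) * (Lam ^ 2 * (g ⬝ᵥ g))
      = κ / 2 * (g ⬝ᵥ g) := by
    rw [hκ]; field_simp
  have k4 := mul_le_mul_of_nonneg_left hPL (by positivity : 0 ≤ κ / 2)
  rw [hβκ]
  nlinarith

lemma beta_le {δ Δ α m M p lam Lam ρ ε β : ℝ} (hδΔ : δ ≤ Δ) (hΔ : Δ < 1) (hm : 0 < m)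
    (hmM : m ≤ M) (hα : 0 < α) (hp : 0 < p) (hp1 : p ≤ 1)
    (hρ : ρ = 2 * (1 - δ) / (2 * (1 - δ) + α * m))
    (hlam : lam = 1 / (2 * (1 - δ) + α * M))
    (hLam : Lam = (1 + ρ) / (2 * (1 - Δ) + α * m))
    (hβ : β = α * m * ε * (2 * p * lam ^ 2 - ε * Lam ^ 2) / (lam * p)) : 0 ≤ 1 - β := by
  have ham : 0 < α * m := mul_pos hα hm
  have haM : α * m ≤ α * M := mul_le_mul_of_nonneg_left hmM hα.le
  have hρ0 : 0 < ρ := by rw [hρ]; apply div_pos <;> linarith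
  have hlam0 : 0 < lam := by rw [hlam]; apply div_pos <;> linarith
  have hlL : lam ≤ Lam := by
    rw [hlam, hLam]; apply div_le_div₀ <;> linarith
  have hl1 : α * m * lam ≤ 1 := by
    rw [hlam, mul_one_div, div_le_one] <;> linarith
  rw [sub_nonneg, hβ, div_le_one (by positivity)]
  have h2 : lam ^ 2 ≤ Lam ^ 2 := by gcongr
  have h3 : ε * (2 * p * lam ^ 2 - ε * Lam ^ 2) ≤ lam ^ 2 * p ^ 2 := by
    nlinarith [mul_le_mul_of_nonneg_left h2 (sq_nonneg ε), mul_nonneg (sq_nonneg lam) (sq_nonneg (p - ε))]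
  calc α * m * ε * (2 * p * lam ^ 2 - ε * Lam ^ 2)
      = α * m * (ε * (2 * p * lam ^ 2 - ε * Lam ^ 2)) := by ring
    _ ≤ α * m * (lam ^ 2 * p ^ 2) := by gcongr
    _ = (α * m * lam) * p * (lam * p) := by ring
    _ ≤ 1 * 1 * (lam * p) := by gcongr
    _ = lam * p := by ring

open MeasureTheory ProbabilityTheory in
/-- Expectation of a function of a finite-valued variable and an independent index. -/
lemma expect_split {n : ℕ} {Ω S : Type*} [MeasurableSpace Ω] [Finite S] [MeasurableSpace S]
    [MeasurableSingletonClass S] (μ : Measure Ω) [IsProbabilityMeasure μ]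
    (Y : Ω → S) (J : Ω → Fin n) (hY : Measurable Y) (hJ : Measurable J) (hYJ : IndepFun Y J μ)
    (p : Fin n → ℝ) (hp : ∀ i, 0 ≤ p i) (hdist : ∀ i, μ {ω | J ω = i} = ENNReal.ofReal (p i))
    (h : S → Fin n → ℝ) :
    ∫ ω, h (Y ω) (J ω) ∂μ = ∫ ω, ∑ i, p i * h (Y ω) i ∂μ := by
  have hint : ∀ u : S → ℝ, Integrable (fun ω => u (Y ω)) μ := fun u => by
    have : IsFiniteMeasure (μ.map Y) := inferInstance
    exact (Integrable.of_finite (μ := μ.map Y) (f := u)).comp_measurable hY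
  have hintP : ∀ u : S × Fin n → ℝ, Integrable (fun ω => u (Y ω, J ω)) μ := fun u => by
    exact (Integrable.of_finite (μ := μ.map (fun ω => (Y ω, J ω))) (f := u)).comp_measurable
      (hY.prodMk hJ)
  have e : ∀ ω, h (Y ω) (J ω) = ∑ i, h (Y ω) i * (if J ω = i then (1 : ℝ) else 0) := fun ω => by
    simp
  simp_rw [e]
  rw [integral_finsetSum _ fun i _ => hintP (fun q => h q.1 i * (if q.2 = i then (1 : ℝ) else 0)),
    integral_finsetSum _ fun i _ => (hint fun s => h s i).const_mul (p i)]
  refine Finset.sum_congr rfl fun i _ => ?_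
  rw [hYJ.integral_fun_comp_mul_comp (f := fun s => h s i)
    (g := fun j => if j = i then (1 : ℝ) else 0) hY.aemeasurable hJ.aemeasurable .of_discrete
    .of_discrete, integral_const_mul, mul_comm]
  congr 1
  have hset : MeasurableSet {ω | J ω = i} := hJ (measurableSet_singleton i)
  have : (fun ω => if J ω = i then (1 : ℝ) else 0) = Set.indicator {ω | J ω = i} 1 := by
    ext ω; simp [Set.indicator_apply]
  rw [this, integral_indicator_one hset, Measure.real, hdist, ENNReal.toReal_ofReal (hp i)]

/-- Global linear convergence in expectation of the function values:
`E[F(x(t)) − F*] ≤ (1 − β)^t (F(x(0)) − F*)`. -/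
theorem stmt9 (n : ℕ) (hn : 1 ≤ n)
    (W : Matrix (Fin n) (Fin n) ℝ) (hWsymm : W.IsSymm)
    (hWnonneg : ∀ i j, 0 ≤ W i j) (hWlt : ∀ i j, W i j < 1)
    (hWone : W.mulVec (fun _ => 1) = fun _ => 1)
    (hWnull : ∀ x : Fin n → ℝ, ((1 - W).mulVec x = 0 ↔ ∃ c : ℝ, x = fun _ => c))
    (δ Δ : ℝ) (hδ : 0 < δ) (hδΔ : δ ≤ Δ) (hΔ : Δ < 1)
    (hWdiag : ∀ i, δ ≤ W i i ∧ W i i ≤ Δ)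
    (f : Fin n → ℝ → ℝ) (hf : ∀ i, ContDiff ℝ 2 (f i))
    (hconv : ∀ i, ConvexOn ℝ Set.univ (f i))
    (m M : ℝ) (hm : 0 < m) (hmM : m ≤ M)
    (hd2 : ∀ i s, m ≤ d2 f i s ∧ d2 f i s ≤ M)
    (α : ℝ) (hα : 0 < α)
    (p : Fin n → ℝ) (pmin pmax : ℝ) (hpmin : 0 < pmin) (hpmax : pmax < 1)
    (hp : ∀ i, pmin ≤ p i ∧ p i ≤ pmax) (hpsum : ∑ i, p i = 1)
    (xstar : Fin n → ℝ) (hmin : ∀ y, Fobj W f α xstar ≤ Fobj W f α y)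
    (ρ lam Lam : ℝ) (hρ : ρ = 2 * (1 - δ) / (2 * (1 - δ) + α * m))
    (hlam : lam = 1 / (2 * (1 - δ) + α * M))
    (hLam : Lam = (1 + ρ) / (2 * (1 - Δ) + α * m))
    (ε : ℝ) (hε : 0 < ε) (hεlt : ε < min (1 / 2) (2 * pmin * (lam / Lam) ^ 2))
    (β : ℝ) (hβ : β = α * m * ε * (2 * pmin * lam ^ 2 - ε * Lam ^ 2) / (lam * pmin))
    (Ω : Type*) [MeasurableSpace Ω] (μ : MeasureTheory.Measure Ω)
    [MeasureTheory.IsProbabilityMeasure μ]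
    (I : ℕ → Ω → Fin n) (hImeas : ∀ t, Measurable (I t))
    (hIindep : ProbabilityTheory.iIndepFun I μ)
    (hIdist : ∀ t i, μ {ω | I t ω = i} = ENNReal.ofReal (p i))
    (x0 : Fin n → ℝ) (X : ℕ → Ω → Fin n → ℝ)
    (hX0 : ∀ ω, X 0 ω = x0)
    (hXsucc : ∀ (t : ℕ) (ω : Ω), X (t + 1) ω = upd W f α p ε (X t ω) (I (t + 1) ω))
    : ∀ t : ℕ,
      ∫ ω, (Fobj W f α (X t ω) - Fobj W f α xstar) ∂μ ≤
        (1 - β) ^ t * (Fobj W f α x0 - Fobj W f α xstar) := by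
  have hβ0 : 0 ≤ 1 - β := by
    refine beta_le hδΔ hΔ hm hmM hα hpmin ?_ hρ hlam hLam hβ
    have h0 := hp ⟨0, hn⟩
    linarith [h0.1, h0.2]
  have hp0 : ∀ i, 0 ≤ p i := fun i => by linarith [(hp i).1]
  have hstep := one_step n W hWsymm hWnonneg hWone δ Δ hδΔ hΔ hWdiag f hf m M hm hmM hd2 α hα p
    pmin hpmin (fun i => (hp i).1) hpsum xstar ρ lam Lam hρ hlam hLam ε hε
    (lt_of_lt_of_le hεlt (min_le_right _ _)) β hβ
  have hfac : ∀ t : ℕ, ∃ φ : (Finset.range (t + 1) → Fin n) → Fin n → ℝ,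
      ∀ ω, X t ω = φ (fun i => I i ω) := by
    intro t
    induction t with
    | zero => exact ⟨fun _ => x0, hX0⟩
    | succ t ih =>
      obtain ⟨φ, hφ⟩ := ih
      refine ⟨fun y => upd W f α p ε
        (φ fun i => y ⟨i, Finset.mem_range.2 ((Finset.mem_range.1 i.2).trans (Nat.lt_succ_self _))⟩)
        (y ⟨t + 1, Finset.mem_range.2 (Nat.lt_succ_self _)⟩), fun ω => ?_⟩
      rw [hXsucc, hφ]
  intro t
  induction t with
  | zero => simp [hX0]
  | succ t ih =>
    obtain ⟨φ, hφ⟩ := hfac t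
    have hYm : Measurable (fun ω (i : Finset.range (t + 1)) => I i ω) :=
      measurable_pi_lambda _ fun i => hImeas i
    have hind : ProbabilityTheory.IndepFun (fun ω (i : Finset.range (t + 1)) => I i ω)
        (I (t + 1)) μ := by
      have h1 := hIindep.indepFun_finset (Finset.range (t + 1)) {t + 1} (by simp) hImeas
      exact h1.comp (φ := id) (ψ := fun y => y ⟨t + 1, Finset.mem_singleton_self _⟩)
        measurable_id Measurable.of_discrete
    have hint : ∀ u : (Finset.range (t + 1) → Fin n) → ℝ,
        MeasureTheory.Integrable (fun ω => u (fun i => I i ω)) μ := fun u =>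
      (MeasureTheory.Integrable.of_finite (f := u)).comp_measurable hYm
    simp_rw [hXsucc, hφ]
    rw [expect_split μ _ _ hYm (hImeas (t + 1)) hind p hp0 (hIdist (t + 1))
      (fun y i => Fobj W f α (upd W f α p ε (φ y) i) - Fobj W f α xstar)]
    simp_rw [hφ] at ih
    calc _ ≤ ∫ ω, (1 - β) * (Fobj W f α (φ fun i => I i ω) - Fobj W f α xstar) ∂μ :=
          MeasureTheory.integral_mono
            (hint fun y => ∑ i, p i * (Fobj W f α (upd W f α p ε (φ y) i) - Fobj W f α xstar))
            (hint fun y => (1 - β) * (Fobj W f α (φ y) - Fobj W f α xstar))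
            (fun ω => hstep _)
      _ = (1 - β) * ∫ ω, (Fobj W f α (φ fun i => I i ω) - Fobj W f α xstar) ∂μ :=
          MeasureTheory.integral_const_mul _ _
      _ ≤ (1 - β) * ((1 - β) ^ t * (Fobj W f α x0 - Fobj W f α xstar)) :=
          mul_le_mul_of_nonneg_left ih hβ0
      _ = _ := by ring
end
end
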